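/- Let H be a real Hilbert space, let β > 0, let B : H → H be β-cocoercive, let α > 0, let U : H → H be a bounded self-adjoint linear operator with ⟨Ux, x⟩ ≥ α‖x‖² for all x and with ‖U‖ ≤ μ for some μ > 0, and let V : H → H be a bounded self-adjoint linear operator with V∘U = U∘V = id. Let J : H → H be firmly nonexpansive with respect to ‖·‖_V, let γ > 0, and let x* ∈ H satisfy x* = J(x* − γ·U(B x*)). Then for every x ∈ H, writing p := J(x − γ·U(Bx)) and w := (x − p) − γ·(U(Bx) − U(Bx*)), one has ‖p − x*‖²_V ≤ ‖x − x*‖²_V − γ·(2β − γμ)·‖Bx − Bx*‖² − ‖w‖²_V. -/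

import Mathlib

open RealInnerProductSpace

/-!
In the `V`-metric the forward step `x ↦ x - γ U B x` expands as
`‖z - γ U d‖²_V = ‖z‖²_V - 2γ⟪z, d⟫ + γ²⟪d, U d⟫` with `z = x - y` and `d = B x - B y`, because `V`
cancels `U`. Cocoercivity bounds the cross term and the upper bound `μ` on `U` bounds the quadratic
one. Applying firm nonexpansiveness of `J` to the two forward points then gives the estimate for
any pair `x`, `y`; at a fixed point the residual `y - J (y - γ U B y)` vanishes.
-/

section ForwardBackward

variable {H : Type*} [NormedAddCommGroup H] [InnerProductSpace ℝ H]

/-- `B` is `β`-cocoercive, the quantitative monotonicity assumed of the forward operator.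
The constant `β` is an arbitrary real number. -/
def IsCocoercive (β : ℝ) (B : H → H) : Prop :=
  ∀ x y : H, β * ‖B x - B y‖ ^ 2 ≤ ⟪x - y, B x - B y⟫

/-- The squared `V`-norm `‖z‖²_V`, in which the iterates are measured. It is a quadratic form for
every linear `V`, with no positivity built in. -/
def weightedNormSq (V : H →ₗ[ℝ] H) (z : H) : ℝ :=
  ⟪V z, z⟫

/-- `J` is firmly nonexpansive with respect to `‖·‖_V`, the property of the resolvent used in the
backward step. -/
def IsFirmlyNonexpansive (V : H →ₗ[ℝ] H) (J : H → H) : Prop :=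
  ∀ x y : H, weightedNormSq V (J x - J y) ≤
    weightedNormSq V (x - y) - weightedNormSq V ((x - J x) - (y - J y))

/-- The explicit half `x ↦ x - γ U B x` of the forward-backward iteration, with step size `γ` and
preconditioner `U`. -/
def forwardStep (U : H →ₗ[ℝ] H) (B : H → H) (γ : ℝ) (x : H) : H :=
  x - γ • U (B x)

variable {U V : H →ₗ[ℝ] H} {B J : H → H} {β γ μ : ℝ}

theorem forwardStep_sub_forwardStep (x y : H) :
    forwardStep U B γ x - forwardStep U B γ y = (x - y) - γ • U (B x - B y) := by
  rw [forwardStep, forwardStep, map_sub, smul_sub, sub_sub_sub_comm]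

theorem forwardStep_sub_sub_forwardStep_sub (x y p q : H) :
    (forwardStep U B γ x - p) - (forwardStep U B γ y - q) =
      (x - p) - (y - q) - γ • (U (B x) - U (B y)) := by
  simp only [forwardStep, smul_sub]
  abel

theorem weightedNormSq_sub (hV : V.IsSymmetric) (a b : H) :
    weightedNormSq V (a - b) = weightedNormSq V a - 2 * ⟪a, V b⟫ + weightedNormSq V b := by
  simp only [weightedNormSq, map_sub, inner_sub_left, inner_sub_right]
  rw [hV a b, real_inner_comm a (V b)]
  ring

theorem weightedNormSq_sub_smul_of_leftInverse (hV : V.IsSymmetric)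
    (hVU : Function.LeftInverse V U) (t : ℝ) (z d : H) :
    weightedNormSq V (z - t • U d) =
      weightedNormSq V z - 2 * t * ⟪z, d⟫ + t ^ 2 * ⟪d, U d⟫ := by
  rw [weightedNormSq_sub hV, weightedNormSq, weightedNormSq, map_smul, hVU d]
  simp only [real_inner_smul_left, real_inner_smul_right]
  ring

theorem inner_apply_self_le_of_opNorm_le {T : H →L[ℝ] H} (hT : ‖T‖ ≤ μ) (d : H) :
    ⟪d, T d⟫ ≤ μ * ‖d‖ ^ 2 :=
  calc
    ⟪d, T d⟫ ≤ ‖d‖ * ‖T d‖ := real_inner_le_norm d (T d)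
    _ ≤ ‖d‖ * (μ * ‖d‖) := by gcongr; exact T.le_of_opNorm_le hT d
    _ = μ * ‖d‖ ^ 2 := by ring

theorem IsCocoercive.weightedNormSq_forwardStep_sub_le (hB : IsCocoercive β B)
    (hV : V.IsSymmetric) (hVU : Function.LeftInverse V U)
    (hU : ∀ d : H, ⟪d, U d⟫ ≤ μ * ‖d‖ ^ 2) (hγ : 0 ≤ γ) (x y : H) :
    weightedNormSq V (forwardStep U B γ x - forwardStep U B γ y) ≤
      weightedNormSq V (x - y) - γ * (2 * β - γ * μ) * ‖B x - B y‖ ^ 2 :=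
  calc
    weightedNormSq V (forwardStep U B γ x - forwardStep U B γ y)
    _ = weightedNormSq V (x - y) - 2 * γ * ⟪x - y, B x - B y⟫
          + γ ^ 2 * ⟪B x - B y, U (B x - B y)⟫ := by
      rw [forwardStep_sub_forwardStep, weightedNormSq_sub_smul_of_leftInverse hV hVU]
    _ ≤ weightedNormSq V (x - y) - 2 * γ * (β * ‖B x - B y‖ ^ 2)
          + γ ^ 2 * (μ * ‖B x - B y‖ ^ 2) := by
      gcongr
      · exact hB x y
      · exact hU (B x - B y)
    _ = weightedNormSq V (x - y) - γ * (2 * β - γ * μ) * ‖B x - B y‖ ^ 2 := by ring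

theorem forward_backward_key_estimate_general (hB : IsCocoercive β B)
    (hV : V.IsSymmetric) (hVU : Function.LeftInverse V U)
    (hU : ∀ d : H, ⟪d, U d⟫ ≤ μ * ‖d‖ ^ 2) (hJ : IsFirmlyNonexpansive V J) (hγ : 0 ≤ γ) (x y : H) :
    letI p : H := J (forwardStep U B γ x)
    letI q : H := J (forwardStep U B γ y)
    weightedNormSq V (p - q) ≤
      weightedNormSq V (x - y) - γ * (2 * β - γ * μ) * ‖B x - B y‖ ^ 2
        - weightedNormSq V ((x - p) - (y - q) - γ • (U (B x) - U (B y))) := by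
  have forward := hB.weightedNormSq_forwardStep_sub_le hV hVU hU hγ x y
  have backward := hJ (forwardStep U B γ x) (forwardStep U B γ y)
  rw [forwardStep_sub_sub_forwardStep_sub] at backward
  linarith

end ForwardBackward

/-- key estimate combining firm nonexpansiveness of the resolvent with
cocoercivity of `B` in the variable metric setting. -/
theorem forward_backward_key_estimate
    {H : Type*} [NormedAddCommGroup H] [InnerProductSpace ℝ H] [CompleteSpace H]
    (β : ℝ) (hβ : 0 < β) (B : H → H)
    (hB : ∀ x y : H, ⟪x - y, B x - B y⟫ ≥ β * ‖B x - B y‖ ^ 2)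
    (α : ℝ) (hα : 0 < α) (μ : ℝ) (hμ : 0 < μ)
    (U V : H →L[ℝ] H)
    (hU : IsSelfAdjoint U)
    (hUpos : ∀ x : H, ⟪U x, x⟫ ≥ α * ‖x‖ ^ 2)
    (hUnorm : ‖U‖ ≤ μ)
    (hV : IsSelfAdjoint V)
    (hVU : V.comp U = ContinuousLinearMap.id ℝ H)
    (hUV : U.comp V = ContinuousLinearMap.id ℝ H)
    (J : H → H)
    (hJ : ∀ x y : H,
      ⟪V (J x - J y), J x - J y⟫ ≤
        ⟪V (x - y), x - y⟫ - ⟪V ((x - J x) - (y - J y)), (x - J x) - (y - J y)⟫)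
    (γ : ℝ) (hγ : 0 < γ)
    (xs : H) (hxs : xs = J (xs - γ • U (B xs))) :
    ∀ x : H,
      letI p : H := J (x - γ • U (B x))
      letI w : H := (x - p) - γ • (U (B x) - U (B xs))
      ⟪V (p - xs), p - xs⟫ ≤
        ⟪V (x - xs), x - xs⟫ - γ * (2 * β - γ * μ) * ‖B x - B xs‖ ^ 2 - ⟪V w, w⟫ := by
  intro x
  simpa only [weightedNormSq, forwardStep, ContinuousLinearMap.coe_coe, ← hxs, sub_self, sub_zero]
    using forward_backward_key_estimate_general hB hV.isSymmetric (DFunLike.congr_fun hVU)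
      (inner_apply_self_le_of_opNorm_le hUnorm) hJ hγ.le x xs
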